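/- arXiv:1502.02148 — 2 statements merged into one kernel-verified Lean document; each statement's English description precedes it below -/
import Mathlib

section
/- There exists a constant C > 0 such that for every real x ≥ 1, the number of pairs (I, J) of nonzero ideals of ℤ[i] with N(I) ≤ x and N(J) ≤ x differs from π²x²/16 by at most C·x^(4/3). -/
open Real

/-- The absolute norm of an ideal of `ℤ[i]`: the cardinality of the quotient ring. -/
noncomputable def normI (I : Ideal GaussianInt) : ℕ := Nat.card (GaussianInt ⧸ I)

/-- `P x` : pairs of nonzero ideals of `ℤ[i]` with both norms at most `x`. -/
noncomputable def P (x : ℝ) : Set (Ideal GaussianInt × Ideal GaussianInt) :=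
  {p | p.1 ≠ ⊥ ∧ p.2 ≠ ⊥ ∧ (normI p.1 : ℝ) ≤ x ∧ (normI p.2 : ℝ) ≤ x}


noncomputable def ee (t : ℝ) : ℂ := Complex.exp ((2 * π * t : ℝ) * Complex.I)

lemma ee_norm (t : ℝ) : ‖ee t‖ = 1 := Complex.norm_exp_ofReal_mul_I _

lemma ee_add (s t : ℝ) : ee (s + t) = ee s * ee t := by
  unfold ee
  rw [← Complex.exp_add]
  congr 1
  push_cast
  ring

lemma ee_int (k : ℤ) : ee k = 1 := by
  unfold ee
  rw [Complex.exp_eq_one_iff]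
  exact ⟨k, by push_cast; ring⟩

lemma ee_key (t : ℝ) (k : ℤ) (hs : Real.sin (π * (t - k)) ≠ 0) :
    (1 - ee t) * (1 / 2 + (Real.cos (π * (t - k)) / Real.sin (π * (t - k)) / 2 : ℝ) * Complex.I) = 1 := by
  have h1 : ee t = ee (t - k) := by
    have := ee_add (t - k) k
    rw [ee_int, mul_one, sub_add_cancel] at this
    exact this
  rw [h1]
  set a := π * (t - k) with ha
  have h2 : ee (t - k) = (Real.cos (2 * a) : ℂ) + (Real.sin (2 * a) : ℂ) * Complex.I := by
    unfold ee
    rw [Complex.exp_mul_I, Complex.ofReal_cos, Complex.ofReal_sin, ha]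
    congr 2 <;> (push_cast; ring_nf)
  rw [h2, Real.cos_two_mul, Real.sin_two_mul]
  have h3 := Real.sin_sq_add_cos_sq a
  generalize Real.cos a = C at *
  generalize Real.sin a = S at *
  have h4 : (S : ℂ) ^ 2 + (C : ℂ) ^ 2 = 1 := by exact_mod_cast h3
  have h5 : (S : ℂ) ≠ 0 := by exact_mod_cast hs
  push_cast
  field_simp
  have hI : Complex.I ^ 2 = -1 := Complex.I_sq
  linear_combination (-2 * S * C ^ 2) * hI + (- 2 * C * Complex.I) * h4

lemma cot_anti {a b : ℝ} (ha : 0 < a) (hab : a ≤ b) (hb : b < π) :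
    Real.cos b / Real.sin b ≤ Real.cos a / Real.sin a := by
  have h1 : 0 < Real.sin a := Real.sin_pos_of_pos_of_lt_pi ha (by linarith)
  have h2 : 0 < Real.sin b := Real.sin_pos_of_pos_of_lt_pi (by linarith) hb
  have h3 : 0 ≤ Real.sin (b - a) := Real.sin_nonneg_of_nonneg_of_le_pi (by linarith) (by linarith)
  rw [div_le_div_iff₀ h2 h1]
  rw [Real.sin_sub] at h3
  nlinarith

lemma sin_lower {θ t : ℝ} (hθ : 0 < θ) (h1 : θ ≤ t) (h2 : t ≤ 1 - θ) :
    2 * θ ≤ Real.sin (π * t) := by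
  have hp := Real.pi_pos
  rcases le_total t (1/2) with h | h
  · have := Real.mul_le_sin (x := π * t) (by nlinarith) (by nlinarith)
    have h3 : 2 / π * (π * t) = 2 * t := by field_simp
    linarith
  · have := Real.mul_le_sin (x := π * (1 - t)) (by nlinarith) (by nlinarith)
    have h3 : 2 / π * (π * (1 - t)) = 2 * (1 - t) := by field_simp
    have h4 : Real.sin (π * (1 - t)) = Real.sin (π * t) := by
      rw [mul_sub, mul_one, Real.sin_pi_sub]
    linarith

lemma KL_aux (F : ℕ → ℝ) (a : ℕ) (k : ℤ) (θ : ℝ) (hθ : 0 < θ) (m : ℕ)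
    (h1 : ∀ n, a ≤ n → n ≤ a + m → k + θ ≤ F (n+1) - F n)
    (h2 : ∀ n, a ≤ n → n ≤ a + m → F (n+1) - F n ≤ k + 1 - θ)
    (h3 : ∀ n, a ≤ n → n < a + m → F (n+1) - F n ≤ F (n+2) - F (n+1)) 
    (c : ℕ → ℝ) (hc : ∀ n, c n = Real.cos (π * (F (n+1) - F n - k)) / Real.sin (π * (F (n+1) - F n - k)) / 2) :
    ‖∑ n ∈ Finset.Ico a (a + m + 1), ee (F n) + ee (F (a+m+1)) * (1 / 2 + (c (a+m) : ℝ) * Complex.I)‖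
      ≤ 1 / 2 + |c a| + (c a - c (a+m)) := by
  have key : ∀ n, a ≤ n → n ≤ a + m → 
      ee (F n) = (ee (F n) - ee (F (n+1))) * (1 / 2 + (c n : ℝ) * Complex.I) := by
    intro n hn hn'
    have hs : Real.sin (π * (F (n+1) - F n - k)) ≠ 0 := by
      have := sin_lower hθ (t := F (n+1) - F n - k) (by linarith [h1 n hn hn']) (by linarith [h2 n hn hn'])
      linarith
    have := ee_key (F (n+1) - F n) k hs
    rw [← hc] at this
    have e1 : ee (F (n+1)) = ee (F n) * ee (F (n+1) - F n) := by
      rw [← ee_add]; congr 1; ring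
    rw [e1]
    linear_combination (-ee (F n)) * this
  induction m with
  | zero =>
    have k0 := key a le_rfl (by simp)
    have : ∑ n ∈ Finset.Ico a (a + 0 + 1), ee (F n) + ee (F (a+0+1)) * (1 / 2 + (c (a+0) : ℝ) * Complex.I)
      = ee (F a) * (1 / 2 + (c a : ℝ) * Complex.I) := by
      simp only [add_zero, Nat.Ico_succ_singleton, Finset.sum_singleton]
      linear_combination k0
    rw [this, norm_mul, ee_norm, one_mul]
    calc _ ≤ ‖(1/2 : ℂ)‖ + ‖(c a : ℂ) * Complex.I‖ := norm_add_le _ _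
      _ = _ := by simp
  | succ m ih =>
    have ih := ih (fun n hn hn' => h1 n hn (by omega)) (fun n hn hn' => h2 n hn (by omega))
      (fun n hn hn' => h3 n hn (by omega)) (fun n hn hn' => key n hn (by omega))
    have k0 := key (a + m + 1) (by omega) (by omega)
    have hmono : c (a + m + 1) ≤ c (a + m) := by
      rw [hc, hc]
      apply div_le_div_of_nonneg_right _ (by norm_num)
      have hp := Real.pi_pos
      have i1 := h1 (a+m) (by omega) (by omega)
      have i2 := h2 (a+m+1) (by omega) (by omega)
      have i3 := h3 (a+m) (by omega) (by omega)
      apply cot_anti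
      · apply mul_pos hp; linarith
      · apply mul_le_mul_of_nonneg_left _ hp.le
        linarith
      · have : F (a + m + 1 + 1) - F (a + m + 1) - k < 1 := by linarith
        nlinarith
    have : ∑ n ∈ Finset.Ico a (a + (m+1) + 1), ee (F n) + ee (F (a+(m+1)+1)) * (1 / 2 + (c (a+(m+1)) : ℝ) * Complex.I)
      = (∑ n ∈ Finset.Ico a (a + m + 1), ee (F n) + ee (F (a+m+1)) * (1 / 2 + (c (a+m) : ℝ) * Complex.I))
        + ee (F (a+m+1)) * (((c (a+m+1) - c (a+m) : ℝ) : ℂ) * Complex.I) := by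
      rw [← add_assoc a m 1, Finset.sum_Ico_succ_top (by omega)]
      push_cast
      linear_combination k0
    rw [this]
    refine (norm_add_le _ _).trans ?_
    have : ‖ee (F (a+m+1)) * (((c (a+m+1) - c (a+m) : ℝ) : ℂ) * Complex.I)‖ = c (a+m) - c (a+m+1) := by
      rw [norm_mul, ee_norm, norm_mul, Complex.norm_I, Complex.norm_real, Real.norm_eq_abs, abs_sub_comm, abs_of_nonneg (by linarith)]
      ring
    rw [this, ← add_assoc a m 1]
    linarith

lemma KL (F : ℕ → ℝ) (a b : ℕ) (k : ℤ) (θ : ℝ) (hθ : 0 < θ)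
    (h1 : ∀ n, a ≤ n → n < b → k + θ ≤ F (n+1) - F n)
    (h2 : ∀ n, a ≤ n → n < b → F (n+1) - F n ≤ k + 1 - θ)
    (h3 : ∀ n, a ≤ n → n + 1 < b → F (n+1) - F n ≤ F (n+2) - F (n+1)) :
    ‖∑ n ∈ Finset.Ico a b, ee (F n)‖ ≤ 2 / θ := by
  rcases Nat.lt_or_ge a b with hab | hab
  · obtain ⟨m, rfl⟩ : ∃ m, b = a + m + 1 := ⟨b - a - 1, by omega⟩
    have hc : ∀ n, a ≤ n → n < a + m + 1 → |Real.cos (π * (F (n+1) - F n - k)) / Real.sin (π * (F (n+1) - F n - k)) / 2| ≤ 1 / (4 * θ) := by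
      intro n hn hn'
      have := sin_lower hθ (t := F (n+1) - F n - k) (by linarith [h1 n hn hn']) (by linarith [h2 n hn hn'])
      rw [abs_div, abs_div, abs_of_pos (by linarith : 0 < Real.sin (π * (F (n+1) - F n - k))), abs_two, div_div]
      apply div_le_div₀ (by norm_num) (Real.abs_cos_le_one _) (by positivity) (by linarith)
    have := KL_aux F a k θ hθ m (fun n hn hn' => h1 n hn (by omega)) (fun n hn hn' => h2 n hn (by omega))
      (fun n hn hn' => h3 n hn (by omega)) _ (fun n => rfl)
    set c : ℕ → ℝ := fun n => Real.cos (π * (F (n+1) - F n - k)) / Real.sin (π * (F (n+1) - F n - k)) / 2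
    have ca : |c a| ≤ 1 / (4 * θ) := hc a le_rfl (by omega)
    have cb : |c (a+m)| ≤ 1 / (4 * θ) := hc (a+m) (by omega) (by omega)
    change ‖∑ n ∈ Finset.Ico a (a + m + 1), ee (F n) + ee (F (a+m+1)) * (1 / 2 + (c (a+m) : ℝ) * Complex.I)‖
      ≤ 1 / 2 + |c a| + (c a - c (a+m)) at this
    have hn : ‖ee (F (a+m+1)) * (1 / 2 + (c (a+m) : ℝ) * Complex.I)‖ ≤ 1/2 + |c (a+m)| := by
      rw [norm_mul, ee_norm, one_mul]
      refine (norm_add_le _ _).trans (by simp)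
    have hθ2 : θ ≤ 1 / 2 := by linarith [h1 a le_rfl (by omega), h2 a le_rfl (by omega)]
    have h5 : ‖∑ n ∈ Finset.Ico a (a + m + 1), ee (F n)‖ ≤ 1 + 4 * (1 / (4 * θ)) := by
      have := norm_sub_le (∑ n ∈ Finset.Ico a (a + m + 1), ee (F n) + ee (F (a+m+1)) * (1 / 2 + (c (a+m) : ℝ) * Complex.I)) (ee (F (a+m+1)) * (1 / 2 + (c (a+m) : ℝ) * Complex.I))
      rw [add_sub_cancel_right] at this
      linarith [abs_le.1 ca, abs_le.1 cb]
    refine h5.trans ?_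
    have : 1 ≤ 1 / θ := by rw [le_div_iff₀ hθ]; linarith
    have e : 4 * (1 / (4 * θ)) = 1 / θ := by field_simp
    have e2 : 2 / θ = 1 / θ + 1 / θ := by ring
    linarith
  · rw [Finset.Ico_eq_empty (by omega)]
    simp; positivity

lemma split_lem (g : ℕ → ℝ) (t : ℝ) (a b : ℕ) (hab : a ≤ b)
    (hg : ∀ n, a ≤ n → n + 1 < b → g n ≤ g (n+1)) :
    ∃ c, a ≤ c ∧ c ≤ b ∧ (∀ n, a ≤ n → n < c → g n < t) ∧ (∀ n, c ≤ n → n < b → t ≤ g n) := by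
  induction b, hab using Nat.le_induction with
  | base => exact ⟨a, le_rfl, le_rfl, by intros; omega, by intros; omega⟩
  | succ b hab ih =>
    obtain ⟨c, hc1, hc2, hc3, hc4⟩ := ih (fun n hn hn' => hg n hn (by omega))
    by_cases hcb : c = b
    · subst hcb
      by_cases ht : g c < t
      · refine ⟨c + 1, by omega, le_rfl, ?_, by intros; omega⟩
        intro n hn hn'
        rcases Nat.lt_or_ge n c with h | h
        · exact hc3 n hn h
        · rwa [show n = c by omega]
      · refine ⟨c, hc1, by omega, hc3, ?_⟩
        intro n hn hn'
        rw [show n = c by omega]; linarith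
    · refine ⟨c, hc1, by omega, hc3, ?_⟩
      intro n hn hn'
      rcases Nat.lt_or_ge n b with h | h
      · exact hc4 n hn h
      · have hnb : n = b := by omega
        subst hnb
        have := hc4 (n-1) (by omega) (by omega)
        have h2 := hg (n-1) (by omega) (by omega)
        rw [show n - 1 + 1 = n by omega] at h2
        linarith

/-- trivial bound when range of g is small -/
lemma short_sum (F : ℕ → ℝ) (g : ℕ → ℝ) (lam θ t : ℝ) (hl : 0 < lam) (hθ : 0 ≤ θ) (a b : ℕ) 
    (hg : ∀ n, a ≤ n → n + 1 < b → g n + lam ≤ g (n+1))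
    (h1 : ∀ n, a ≤ n → n < b → t ≤ g n) (h2 : ∀ n, a ≤ n → n < b → g n ≤ t + θ) :
    ‖∑ n ∈ Finset.Ico a b, ee (F n)‖ ≤ θ / lam + 1 := by
  rcases Nat.lt_or_ge a b with hab | hab
  · obtain ⟨m, rfl⟩ : ∃ m, b = a + m + 1 := ⟨b - a - 1, by omega⟩
    have : ∀ j, j ≤ m → g a + j * lam ≤ g (a + j) := by
      intro j hj
      induction j with
      | zero => simp
      | succ j ih =>
        have := hg (a + j) (by omega) (by omega)
        have := ih (by omega)
        push_cast
        rw [← add_assoc a j 1]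
        linarith
    have h3 := this m le_rfl
    have h4 := h1 a le_rfl (by omega)
    have h5 := h2 (a+m) (by omega) (by omega)
    have h6 : (m : ℝ) ≤ θ / lam := by rw [le_div_iff₀ hl]; linarith
    refine (norm_sum_le _ _).trans ?_
    simp only [ee_norm, Finset.sum_const, Nat.card_Ico, nsmul_eq_mul, mul_one]
    rw [show a + m + 1 - a = m + 1 by omega]
    push_cast; linarith
  · rw [Finset.Ico_eq_empty (by omega)]
    simp; positivity

lemma block (F : ℕ → ℝ) (lam : ℝ) (hl : 0 < lam) (hl1 : lam ≤ 1) (a b : ℕ) (hab : a ≤ b) (k : ℤ)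
    (hg : ∀ n, a ≤ n → n + 1 < b → F (n+1) - F n + lam ≤ F (n+2) - F (n+1))
    (h1 : ∀ n, a ≤ n → n < b → k ≤ F (n+1) - F n) (h2 : ∀ n, a ≤ n → n < b → F (n+1) - F n < k + 1) :
    ‖∑ n ∈ Finset.Ico a b, ee (F n)‖ ≤ 6 / √lam := by
  have hs : 0 < √lam := Real.sqrt_pos.2 hl
  have hs1 : √lam ≤ 1 := by rw [Real.sqrt_le_one]; exact hl1
  have hss : √lam * √lam = lam := Real.mul_self_sqrt hl.le
  obtain ⟨c, hc1, hc2, hc3, hc4⟩ := split_lem (fun n => F (n+1) - F n) (k + √lam) a b hab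
    (fun n hn hn' => by have := hg n hn hn'; rw [add_assoc]; linarith)
  obtain ⟨d, hd1, hd2, hd3, hd4⟩ := split_lem (fun n => F (n+1) - F n) (k + 1 - √lam) c b hc2
    (fun n hn hn' => by have := hg n (by omega) hn'; rw [add_assoc]; linarith)
  rw [← Finset.sum_Ico_consecutive _ hc1 hc2, ← Finset.sum_Ico_consecutive _ hd1 hd2]
  have s1 := short_sum F (fun n => F (n+1) - F n) lam (√lam) k hl hs.le a c 
    (fun n hn hn' => by have := hg n hn (by omega); rw [add_assoc n 1 1]; linarith)
    (fun n hn hn' => h1 n hn (by omega)) (fun n hn hn' => (hc3 n hn hn').le)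
  have s3 := short_sum F (fun n => F (n+1) - F n) lam (√lam) (k + 1 - √lam) hl hs.le d b 
    (fun n hn hn' => by have := hg n (by omega) (by omega); rw [add_assoc n 1 1]; linarith)
    (fun n hn hn' => hd4 n hn (by omega)) (fun n hn hn' => by have := h2 n (by omega) hn'; linarith)
  have s2 := KL F c d k (√lam) hs (fun n hn hn' => hc4 n hn (by omega))
    (fun n hn hn' => (hd3 n hn (by omega)).le) 
    (fun n hn hn' => by have := hg n (by omega) (by omega); linarith)
  have e1 : √lam / lam = 1 / √lam := by
    rw [div_eq_div_iff hl.ne' hs.ne', hss, one_mul]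
  have e2 : 1 ≤ 1 / √lam := by rw [le_div_iff₀ hs]; linarith
  rw [e1] at s1 s3
  have e3 : 6 / √lam = 6 * (1 / √lam) := by ring
  have e4 : 2 / √lam = 2 * (1 / √lam) := by ring
  refine (norm_add_le _ _).trans ?_
  have := norm_add_le (∑ i ∈ Finset.Ico c d, ee (F i)) (∑ i ∈ Finset.Ico d b, ee (F i))
  linarith

lemma blocks (F : ℕ → ℝ) (lam : ℝ) (hl : 0 < lam) (hl1 : lam ≤ 1) (b : ℕ) (m : ℕ) : ∀ (a : ℕ) (_ : a ≤ b) (k : ℤ)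
    (_ : ∀ n, a ≤ n → n + 1 < b → F (n+1) - F n + lam ≤ F (n+2) - F (n+1))
    (_ : ∀ n, a ≤ n → n < b → k ≤ F (n+1) - F n) (_ : ∀ n, a ≤ n → n < b → F (n+1) - F n < k + m),
    ‖∑ n ∈ Finset.Ico a b, ee (F n)‖ ≤ m * (6 / √lam) := by
  induction m with
  | zero =>
    intro a hab k hg h1 h2
    rcases Nat.lt_or_ge a b with h | h
    · have := h1 a le_rfl h
      have := h2 a le_rfl h
      push_cast at this
      linarith
    · rw [Finset.Ico_eq_empty (by omega)]
      simp
  | succ m ih =>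
    intro a hab k hg h1 h2
    obtain ⟨c, hc1, hc2, hc3, hc4⟩ := split_lem (fun n => F (n+1) - F n) (k + 1) a b hab
      (fun n hn hn' => by have := hg n hn hn'; rw [add_assoc]; linarith)
    rw [← Finset.sum_Ico_consecutive _ hc1 hc2]
    have s1 := block F lam hl hl1 a c hc1 k (fun n hn hn' => hg n hn (by omega))
      (fun n hn hn' => h1 n hn (by omega)) hc3
    have s2 := ih c hc2 (k+1) (fun n hn hn' => hg n (by omega) hn') 
      (fun n hn hn' => by push_cast; exact hc4 n hn hn') 
      (fun n hn hn' => by have := h2 n (by omega) hn'; push_cast at this ⊢; linarith)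
    refine (norm_add_le _ _).trans ?_
    push_cast
    linarith

/-- second derivative test -/
lemma vdc (F : ℕ → ℝ) (lam : ℝ) (hl : 0 < lam) (a b : ℕ) (hab : a ≤ b)
    (hg : ∀ n, a ≤ n → n + 1 < b → F (n+1) - F n + lam ≤ F (n+2) - F (n+1))
    (hg' : ∀ n, a ≤ n → n + 1 < b → F (n+2) - F (n+1) ≤ F (n+1) - F n + 3 * lam) :
    ‖∑ n ∈ Finset.Ico a b, ee (F n)‖ ≤ 18 * ((b - a : ℕ) * √lam + 1 / √lam) := by
  have hs : 0 < √lam := Real.sqrt_pos.2 hl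
  have hss : √lam * √lam = lam := Real.mul_self_sqrt hl.le
  rcases le_total lam 1 with hl1 | hl1
  · rcases Nat.lt_or_ge a b with hab | hab
    · obtain ⟨m, rfl⟩ : ∃ m, b = a + m + 1 := ⟨b - a - 1, by omega⟩
      have mono : ∀ j, j ≤ m → F (a+1) - F a ≤ F (a+j+1) - F (a+j) ∧ F (a+j+1) - F (a+j) ≤ F (a+1) - F a + 3 * j * lam := by
        intro j hj
        induction j with
        | zero => simp
        | succ j ih =>
          have := hg (a + j) (by omega) (by omega)
          have := hg' (a + j) (by omega) (by omega)
          have := ih (by omega)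
          push_cast
          rw [← add_assoc a j 1]
          rw [add_assoc (a + j) 1 1]
          constructor <;> linarith
      set k := ⌊F (a+1) - F a⌋ with hk
      set T := ⌊3 * (m * lam)⌋₊ with hT
      have hk1 := Int.floor_le (F (a+1) - F a)
      have hk2 := Int.lt_floor_add_one (F (a+1) - F a)
      have hT1 := Nat.floor_le (a := 3 * (m * lam)) (by positivity)
      have hT2 := Nat.lt_floor_add_one (3 * (m * lam))
      rw [← hk] at hk1 hk2
      rw [← hT] at hT1 hT2
      have := blocks F lam hl hl1 (a+m+1) (T + 2) a (by omega) k hg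
        (fun n hn hn' => by
          have := (mono (n - a) (by omega)).1
          rw [show a + (n - a) = n by omega] at this
          linarith)
        (fun n hn hn' => by
          have := (mono (n - a) (by omega)).2
          rw [show a + (n - a) = n by omega] at this
          have h6 : ((n - a : ℕ) : ℝ) * lam ≤ m * lam := by
            apply mul_le_mul_of_nonneg_right _ hl.le
            exact_mod_cast (by omega : n - a ≤ m)
          push_cast
          linarith)
      refine this.trans ?_
      push_cast
      have h7 : ((T : ℝ) + 2) * (6 / √lam) ≤ (3 * (m * lam) + 2) * (6 / √lam) := by
        gcongr
      have h8 : (3 * (m * lam) + 2) * (6 / √lam) = 18 * (m * √lam) + 12 * (1 / √lam) := by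
        field_simp
        rw [Real.sq_sqrt hl.le]; ring
      rw [show a + m + 1 - a = m + 1 by omega]
      push_cast
      have : 0 < 1 / √lam := by positivity
      nlinarith
    · rw [Finset.Ico_eq_empty (by omega)]
      simp; positivity
  · refine (norm_sum_le _ _).trans ?_
    simp only [ee_norm, Finset.sum_const, Nat.card_Ico, nsmul_eq_mul, mul_one]
    have h1 : 1 ≤ √lam := by rw [Real.one_le_sqrt]; exact hl1
    have : 0 < 1 / √lam := by positivity
    have h0 : (0:ℝ) ≤ (b - a : ℕ) := by positivity
    nlinarith

noncomputable def BB (t : ℝ) : ℝ := Int.fract t ^ 2 - Int.fract t + 1 / 6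

lemma BB_hasSum (t : ℝ) : HasSum (fun n : ℕ => 1 / (n : ℝ) ^ 2 * (ee (n * t)).re) (π ^ 2 * BB t) := by
  have h := hasSum_one_div_nat_pow_mul_cos (k := 1) one_ne_zero (x := Int.fract t)
    ⟨Int.fract_nonneg t, (Int.fract_lt_one t).le⟩
  have e1 : ∀ n : ℕ, (ee (n * t)).re = Real.cos (2 * π * n * Int.fract t) := by
    intro n
    unfold ee
    rw [Complex.exp_ofReal_mul_I_re]
    have : 2 * π * (n * t) = 2 * π * n * Int.fract t + ((n * ⌊t⌋ : ℤ) : ℝ) * (2 * π) := by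
      have := Int.fract_add_floor t
      push_cast
      linear_combination (-2 * π * n) * this
    rw [this, Real.cos_add_int_mul_two_pi]
  simp only [e1]
  convert h using 1
  rw [mul_one]
  have : (Polynomial.map (algebraMap ℚ ℝ) (Polynomial.bernoulli 2)).eval (Int.fract t) = BB t := by
    rw [Polynomial.bernoulli]
    simp [Finset.sum_range_succ, BB, bernoulli, bernoulli'_two, bernoulli'_one]
    ring
  rw [this]
  have h2 : (((2 * 1).factorial : ℕ) : ℝ) = 2 := by norm_num [Nat.factorial]
  push_cast at h2 ⊢
  rw [h2]
  ring

lemma BB_fwd (t δ : ℝ) (h0 : 0 ≤ δ) (h1 : δ ≤ 1) :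
    BB (t + δ) - BB t ≤ 2 * δ * (Int.fract t - 1 / 2) + δ ^ 2 := by
  have a0 := Int.fract_nonneg t
  have a1 := Int.fract_lt_one t
  have hf := Int.fract_add_floor t
  unfold BB
  rcases lt_or_ge (Int.fract t + δ) 1 with h | h
  · have : Int.fract (t + δ) = Int.fract t + δ := by
      rw [Int.fract_eq_iff]
      exact ⟨by linarith, h, ⌊t⌋, by linarith⟩
    rw [this]
    nlinarith
  · rcases eq_or_lt_of_le h1 with h1 | h1
    · subst h1
      rw [Int.fract_add_one]; nlinarith
    have : Int.fract (t + δ) = Int.fract t + δ - 1 := by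
      rw [Int.fract_eq_iff]
      exact ⟨by linarith, by linarith, ⌊t⌋ + 1, by push_cast; linarith⟩
    rw [this]
    nlinarith

lemma BB_bwd (t δ : ℝ) (h0 : 0 ≤ δ) (h1 : δ ≤ 1) :
    BB (t + -δ) - BB t ≤ - (2 * δ * (Int.fract t - 1 / 2)) + δ ^ 2 := by
  have a0 := Int.fract_nonneg t
  have a1 := Int.fract_lt_one t
  have hf := Int.fract_add_floor t
  unfold BB
  rcases lt_or_ge (Int.fract t) δ with h | h
  · have : Int.fract (t + -δ) = Int.fract t - δ + 1 := by
      rw [Int.fract_eq_iff]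
      exact ⟨by linarith, by linarith, ⌊t⌋ - 1, by push_cast; linarith⟩
    rw [this]
    nlinarith
  · have : Int.fract (t + -δ) = Int.fract t - δ := by
      rw [Int.fract_eq_iff]
      exact ⟨by linarith, by linarith, ⌊t⌋, by linarith⟩
    rw [this]
    nlinarith

lemma ee_sub_one (t : ℝ) : ‖ee t - 1‖ ≤ 2 * π * |t| := by
  unfold ee
  rw [mul_comm]
  refine (Real.norm_exp_I_mul_ofReal_sub_one_le).trans ?_
  rw [Real.norm_eq_abs, abs_mul, abs_of_pos (by positivity : 0 < 2 * π)]

lemma sum_bound (H : ℕ) (K : ℕ) :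
    (K ≤ H → ∑ h ∈ Finset.range K, (1 / √((h:ℝ) + 1)) ≤ 2 * √K) := by
  intro _
  induction K with
  | zero => simp
  | succ K ih =>
    rw [Finset.sum_range_succ]
    have := ih (by omega)
    push_cast
    have h1 : 0 < √((K:ℝ)+1) := by positivity
    have h2 : 0 ≤ √(K:ℝ) := by positivity
    have h3 : √((K:ℝ)+1) * √((K:ℝ)+1) = K + 1 := Real.mul_self_sqrt (by positivity)
    have h4 : √(K:ℝ) * √(K:ℝ) = K := Real.mul_self_sqrt (by positivity)
    have : 1 / √((K:ℝ)+1) ≤ 2 * √((K:ℝ)+1) - 2 * √(K:ℝ) := by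
      rw [div_le_iff₀ h1]
      nlinarith [sq_nonneg (√((K:ℝ)+1) - √(K:ℝ))]
    linarith

lemma sum_bound2 (H : ℕ) (hH : 0 < H) (j : ℕ) :
    ∑ h ∈ Finset.Ico H (H + j), (1 / (((h:ℝ) + 1) * √((h:ℝ) + 1))) ≤ 2 / √H - 2 / √(H + j) := by
  induction j with
  | zero => simp
  | succ j ih =>
    rw [← add_assoc, Finset.sum_Ico_succ_top (by omega)]
    push_cast
    have hp : (0:ℝ) < H + j := by positivity
    set K : ℝ := H + j with hK
    rw [← add_assoc, ← hK]
    have h1 : 0 < √(K+1) := by positivity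
    have h2 : 0 < √(K:ℝ) := by positivity
    have h3 : √((K:ℝ)+1) * √((K:ℝ)+1) = K + 1 := Real.mul_self_sqrt (by positivity)
    have h4 : √(K:ℝ) * √(K:ℝ) = K := Real.mul_self_sqrt (by positivity)
    have h5 : √K ≤ √(K+1) := Real.sqrt_le_sqrt (by linarith)
    have : 1 / ((K + 1) * √(K+1)) ≤ 2 / √K - 2 / √(K+1) := by
      rw [div_sub_div _ _ h2.ne' h1.ne', div_le_div_iff₀ (by positivity) (by positivity)]
      generalize √(K+1) = p at *
      generalize √K = q at *
      have e : p * p - q * q = 1 := by linarith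
      rw [← h3]
      have : q ≤ (2 * p - q * 2) * (p * p) := by
        have : (p - q) * (p + q) = 1 := by linarith
        have : 1 ≤ (p - q) * (2 * p) := by nlinarith
        nlinarith
      nlinarith
    linarith

lemma sum_bound3 (H : ℕ) (hH : 0 < H) (u : ℕ → ℝ) (A : ℝ) (hA : 0 ≤ A)
    (h0 : u 0 = 0) 
    (h1 : ∀ h : ℕ, |u (h+1)| ≤ A * (1 / √((h:ℝ)+1) / H))
    (h2 : ∀ h : ℕ, |u (h+1)| ≤ A * (1 / (((h:ℝ) + 1) * √((h:ℝ) + 1)))) (S : ℝ) (hS : HasSum u S) :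
    |S| ≤ 4 * A / √H := by
  have ht := (hS.tendsto_sum_nat).abs
  refine le_of_tendsto ht ?_
  filter_upwards [Filter.eventually_ge_atTop (H + 1)] with K hK
  obtain ⟨j, rfl⟩ : ∃ j, K = H + j + 1 := ⟨K - H - 1, by omega⟩
  rw [Finset.sum_range_succ', h0, add_zero]
  refine (Finset.abs_sum_le_sum_abs _ _).trans ?_
  rw [Finset.range_eq_Ico, ← Finset.sum_Ico_consecutive _ (Nat.zero_le H) (by omega), ← Finset.range_eq_Ico]
  have b1 : ∑ i ∈ Finset.range H, |u (i+1)| ≤ A / H * (2 * √H) := by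
    refine (Finset.sum_le_sum (fun h _ => h1 h)).trans ?_
    have := sum_bound H H le_rfl
    calc _ = A / H * ∑ h ∈ Finset.range H, (1 / √((h:ℝ) + 1)) := by
          rw [Finset.mul_sum]; apply Finset.sum_congr rfl; intros; ring
      _ ≤ _ := by gcongr
  have b2 : ∑ i ∈ Finset.Ico H (H+j), |u (i+1)| ≤ A * (2 / √H) := by
    refine (Finset.sum_le_sum (fun h _ => h2 h)).trans ?_
    have := sum_bound2 H hH j
    rw [← Finset.mul_sum]
    have h5 : 0 ≤ 2 / √((H:ℝ) + j) := by positivity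
    gcongr
    linarith
  have hHp : (0:ℝ) < H := by exact_mod_cast hH
  have e : A / H * (2 * √H) = A * (2 / √H) := by
    have : √(H:ℝ) * √H = H := Real.mul_self_sqrt hHp.le
    have : 0 < √(H:ℝ) := by positivity
    field_simp
    rw [Real.sq_sqrt hHp.le]
  have e2 : 4 * A / √H = A * (2 / √H) + A * (2 / √H) := by ring
  rw [e2]
  linarith

/-- main smoothing: -/
lemma BB_sum (f : ℕ → ℝ) (s : Finset ℕ) (W : ℝ) (hW : 0 ≤ W)
    (hE : ∀ h : ℕ, ‖∑ n ∈ s, ee ((h+1) * f n)‖ ≤ W * √((h:ℝ)+1)) (H : ℕ) (hH : 0 < H) (ε : ℝ) (hε : |ε| = 1 / H) :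
    |∑ n ∈ s, (BB (f n + ε) - BB (f n))| ≤ 8 * W / √H := by
  have hs : HasSum (fun h : ℕ => ∑ n ∈ s, (1 / (h : ℝ) ^ 2 * (ee (h * (f n + ε))).re - 1 / (h : ℝ) ^ 2 * (ee (h * f n)).re))
      (∑ n ∈ s, (π ^ 2 * BB (f n + ε) - π ^ 2 * BB (f n))) :=
    hasSum_sum (fun n _ => (BB_hasSum _).sub (BB_hasSum _))
  have key : ∀ h : ℕ, |∑ n ∈ s, (1 / ((h + 1 : ℕ) : ℝ) ^ 2 * (ee ((h + 1 : ℕ) * (f n + ε))).re - 1 / ((h + 1 : ℕ) : ℝ) ^ 2 * (ee ((h + 1 : ℕ) * f n)).re)|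
      ≤ 1 / ((h:ℝ) + 1) ^ 2 * (W * √((h:ℝ)+1)) * ‖ee ((h + 1) * ε) - 1‖ := by
    intro h
    push_cast
    have : ∑ n ∈ s, (1 / ((h:ℝ) + 1) ^ 2 * (ee ((h + 1) * (f n + ε))).re - 1 / ((h:ℝ) + 1) ^ 2 * (ee ((h + 1) * f n)).re)
      = 1 / ((h:ℝ) + 1) ^ 2 * ((∑ n ∈ s, ee ((h+1) * f n)) * (ee ((h + 1) * ε) - 1)).re := by
      rw [Finset.sum_mul, Complex.re_sum, Finset.mul_sum]
      apply Finset.sum_congr rfl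
      intro n _
      rw [mul_add, ee_add, mul_sub, Complex.sub_re, mul_one]
      ring
    rw [this, abs_mul, abs_of_pos (by positivity), mul_assoc]
    gcongr
    refine (Complex.abs_re_le_norm _).trans ?_
    rw [norm_mul]
    gcongr
    exact hE h
  have hHp : (0:ℝ) < H := by exact_mod_cast hH
  have := sum_bound3 H hH _ (2 * π * W) (by positivity) (by simp) (fun h => (key h).trans ?_) (fun h => (key h).trans ?_) _ hs
  · rw [← Finset.sum_congr rfl (fun n _ => mul_sub (π^2) (BB (f n + ε)) (BB (f n))), ← Finset.mul_sum, abs_mul, abs_of_pos (by positivity)] at this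
    have hpi := Real.pi_gt_three
    have h1 : π * |∑ n ∈ s, (BB (f n + ε) - BB (f n))| ≤ 8 * W / √H := by
      have e : 4 * (2 * π * W) / √H = π * (8 * W / √H) := by ring
      rw [e, pow_two, mul_assoc] at this
      exact le_of_mul_le_mul_left this Real.pi_pos
    have := abs_nonneg (∑ n ∈ s, (BB (f n + ε) - BB (f n)))
    nlinarith
  · have h1 := ee_sub_one ((h+1) * ε)
    rw [abs_mul, hε, abs_of_pos (by positivity : (0:ℝ) < h + 1)] at h1
    have hs : √((h:ℝ)+1) * √((h:ℝ)+1) = h + 1 := Real.mul_self_sqrt (by positivity)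
    have hsp : 0 < √((h:ℝ)+1) := by positivity
    calc _ ≤ 1 / ((h:ℝ) + 1) ^ 2 * (W * √((h:ℝ)+1)) * (2 * π * ((h + 1) * (1 / H))) := by gcongr
      _ = _ := by
        field_simp; rw [Real.sq_sqrt (by positivity)]; try ring
  · have h1 : ‖ee ((h + 1) * ε) - 1‖ ≤ 2 := by
      refine (norm_sub_le _ _).trans ?_
      rw [ee_norm]; norm_num
    have hs : √((h:ℝ)+1) * √((h:ℝ)+1) = h + 1 := Real.mul_self_sqrt (by positivity)
    have hsp : 0 < √((h:ℝ)+1) := by positivity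
    calc _ ≤ 1 / ((h:ℝ) + 1) ^ 2 * (W * √((h:ℝ)+1)) * (2 * π) := by
          gcongr; linarith [Real.pi_gt_three]
      _ = _ := by
        field_simp; rw [Real.sq_sqrt (by positivity)]; try ring

lemma psi_sum (f : ℕ → ℝ) (s : Finset ℕ) (W : ℝ) (hW : 0 ≤ W)
    (hE : ∀ h : ℕ, ‖∑ n ∈ s, ee ((h+1) * f n)‖ ≤ W * √((h:ℝ)+1)) (H : ℕ) (hH : 0 < H) :
    |∑ n ∈ s, (Int.fract (f n) - 1 / 2)| ≤ 4 * W * √H + s.card / H := by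
  have hHp : (0:ℝ) < H := by exact_mod_cast hH
  have hH1 : (1:ℝ) ≤ H := by exact_mod_cast hH
  set δ : ℝ := 1 / H with hδ
  have hδ0 : 0 < δ := by positivity
  have hδ1 : δ ≤ 1 := by rw [hδ, div_le_one hHp]; exact hH1
  have b1 := BB_sum f s W hW hE H hH δ (abs_of_pos hδ0)
  have b2 := BB_sum f s W hW hE H hH (-δ) (by rw [abs_neg]; exact abs_of_pos hδ0)
  have c1 := Finset.sum_le_sum (fun n (_ : n ∈ s) => BB_fwd (f n) δ hδ0.le hδ1)
  have c2 := Finset.sum_le_sum (fun n (_ : n ∈ s) => BB_bwd (f n) δ hδ0.le hδ1)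
  rw [Finset.sum_add_distrib, ← Finset.mul_sum, Finset.sum_const, nsmul_eq_mul] at c1
  rw [Finset.sum_add_distrib, Finset.sum_neg_distrib, ← Finset.mul_sum, Finset.sum_const, nsmul_eq_mul] at c2
  have hsq : √(H:ℝ) * √H = H := Real.mul_self_sqrt hHp.le
  have hsp : 0 < √(H:ℝ) := by positivity
  have e1 : 8 * W / √H = 2 * δ * (4 * W * √H) := by
    rw [hδ]; field_simp; rw [Real.sq_sqrt hHp.le]; ring
  have e2 : (s.card:ℝ) * δ ^ 2 = δ * (s.card / H) := by rw [hδ]; field_simp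
  have e3 : (0:ℝ) ≤ δ * (s.card / H) := by positivity
  rw [e1] at b1 b2
  rw [e2] at c1 c2
  rw [abs_le] at b1 b2 ⊢
  constructor
  · refine le_of_mul_le_mul_left (a := 2 * δ) ?_ (by positivity)
    linarith
  · refine le_of_mul_le_mul_left (a := 2 * δ) ?_ (by positivity)
    linarith

noncomputable def cf (x t : ℝ) : ℝ := √(x - t ^ 2)

lemma cf_sq {x t : ℝ} (h : t ^ 2 ≤ x) : cf x t * cf x t = x - t ^ 2 :=
  Real.mul_self_sqrt (by linarith)

lemma cf_nonneg (x t : ℝ) : 0 ≤ cf x t := Real.sqrt_nonneg _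

lemma cf_concave {x a b u : ℝ} (ha : a ^ 2 ≤ x) (hb : b ^ 2 ≤ x) (h0 : 0 ≤ u) (h1 : u ≤ 1) :
    (1 - u) * cf x a + u * cf x b ≤ cf x ((1 - u) * a + u * b) := by
  have e1 := cf_sq ha
  have e2 := cf_sq hb
  have p1 := cf_nonneg x a
  have p2 := cf_nonneg x b
  rw [cf.eq_def x ((1 - u) * a + u * b)]
  apply Real.le_sqrt_of_sq_le
  have h : cf x a * cf x b ≤ x - a * b := by nlinarith [sq_nonneg (cf x a - cf x b), sq_nonneg (a - b)]
  have h2 : 0 ≤ (u * (1 - u)) * (x - a * b - cf x a * cf x b) := by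
    apply mul_nonneg (mul_nonneg h0 (by linarith)) (by linarith)
  have : x - ((1 - u) * a + u * b) ^ 2 - ((1 - u) * cf x a + u * cf x b) ^ 2 
    = 2 * ((u * (1 - u)) * (x - a * b - cf x a * cf x b)) := by
    linear_combination (-(1-u)^2) * e1 - u^2 * e2
  linarith

/-- second differences, with `t - 1, t, t + 1` in range -/
lemma cf_diff {x t : ℝ} (hx : 1 ≤ x) (h0 : 0 ≤ t) (h1 : 2 * (t + 1) ^ 2 ≤ x) :
    1 / √x ≤ 2 * cf x t - cf x (t + 1) - cf x (t - 1) ∧ 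
    2 * cf x t - cf x (t + 1) - cf x (t - 1) ≤ 3 * (1 / √x) := by
  have e1 := cf_sq (x := x) (t := t) (by nlinarith)
  have e2 := cf_sq (x := x) (t := t + 1) (by nlinarith)
  have e3 := cf_sq (x := x) (t := t - 1) (by nlinarith)
  have hs : 0 < √x := by positivity
  have hss : √x * √x = x := Real.mul_self_sqrt (by linarith)
  have u : ∀ v, cf x v ≤ √x := fun v => Real.sqrt_le_sqrt (by nlinarith)
  have l : ∀ v, 2 * v ^ 2 ≤ x → 707 / 1000 * √x ≤ cf x v := by
    intro v hv
    apply Real.le_sqrt_of_sq_le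
    nlinarith
  have u1 := u t
  have u2 := u (t+1)
  have u3 := u (t-1)
  have l1 := l t (by nlinarith)
  have l2 := l (t+1) (by nlinarith)
  have l3 := l (t-1) (by nlinarith)
  clear u l
  have ht : 2 * (t * t) ≤ √x * √x := by nlinarith
  have ht' : t ≤ 7072/10000 * √x := by
    by_contra! hc
    nlinarith
  set r := cf x t
  set p := cf x (t+1)
  set q := cf x (t-1)
  have hprod : (2 * r - p - q) * (2 * r + p + q) = 4 + (p - q) * (p - q) := by
    linear_combination 4 * e1 - 2 * e2 - 2 * e3
  have hpq : (q - p) * (p + q) = 4 * t := by linear_combination e3 - e2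
  have hD : 0 < 2 * r + p + q := by linarith
  have hpq0 : 0 < p + q := by linarith
  have hqp0 : 0 ≤ q - p := by
    by_contra! hc
    have := mul_neg_of_neg_of_pos hc hpq0
    linarith
  have hqp : q - p ≤ 201/100 := by
    by_contra! hc
    have : 201/100 * (1414/1000 * √x) ≤ (q - p) * (p + q) := 
      mul_le_mul hc.le (by linarith) (by positivity) hqp0
    linarith
  have hq2 : (p - q) * (p - q) ≤ 201/100 * (201/100) := by
    have := mul_le_mul hqp hqp hqp0 (by norm_num)
    linarith
  have hq3 : 0 ≤ (p - q) * (p - q) := mul_self_nonneg _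
  have hd0 : 0 ≤ 2 * r - p - q := by
    by_contra! hc
    have := mul_neg_of_neg_of_pos hc hD
    linarith
  constructor
  · rw [div_le_iff₀ hs]
    have : (2 * r - p - q) * (2 * r + p + q) ≤ (2 * r - p - q) * (4 * √x) := 
      mul_le_mul_of_nonneg_left (by linarith) hd0
    linarith
  · rw [mul_one_div, le_div_iff₀ hs]
    have : (2 * r - p - q) * (2828/1000 * √x) ≤ (2 * r - p - q) * (2 * r + p + q) := 
      mul_le_mul_of_nonneg_left (by linarith) hd0
    linarith

lemma cf_cont (x : ℝ) : Continuous (cf x) := by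
  unfold cf; fun_prop

open MeasureTheory in
lemma trap_step {x t : ℝ} (hx : 1 ≤ x) (h0 : 0 ≤ t) (h1 : 2 * (t + 1) ^ 2 ≤ x) :
    (cf x t + cf x (t+1)) / 2 ≤ ∫ u in t..(t+1), cf x u ∧ 
    ∫ u in t..(t+1), cf x u ≤ (cf x t + cf x (t+1)) / 2 + 3 / 2 * (1 / √x) := by
  have e : ∫ u in t..(t+1), cf x u = ∫ u in (0:ℝ)..1, cf x (t + u) := by
    rw [intervalIntegral.integral_comp_add_left (fun u => cf x u) t, add_zero]
  have hc : Continuous (fun u => cf x (t + u)) := (cf_cont x).comp (by fun_prop)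
  have lin : ∀ A B : ℝ, ∫ u in (0:ℝ)..1, (A + u * B) = A + B / 2 := by
    intro A B
    rw [intervalIntegral.integral_add (by simp) ((by fun_prop : Continuous fun u : ℝ => u * B).intervalIntegrable _ _), intervalIntegral.integral_mul_const, integral_id]
    simp; ring
  rw [e]
  constructor
  · have := lin (cf x t) (cf x (t+1) - cf x t)
    have h2 : ∫ u in (0:ℝ)..1, (cf x t + u * (cf x (t+1) - cf x t)) ≤ ∫ u in (0:ℝ)..1, cf x (t + u) := by
      apply intervalIntegral.integral_mono_on zero_le_one
        ((by fun_prop : Continuous fun u : ℝ => cf x t + u * (cf x (t+1) - cf x t)).intervalIntegrable _ _) (hc.intervalIntegrable _ _)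
      intro u hu
      have := cf_concave (x := x) (a := t) (b := t + 1) (u := u) (by nlinarith) (by nlinarith) hu.1 hu.2
      rw [show (1 - u) * t + u * (t + 1) = t + u by ring] at this
      linarith
    linarith
  · have := lin (cf x t) (cf x t - cf x (t-1))
    have h2 : ∫ u in (0:ℝ)..1, cf x (t + u) ≤ ∫ u in (0:ℝ)..1, (cf x t + u * (cf x t - cf x (t-1))) := by
      apply intervalIntegral.integral_mono_on zero_le_one (hc.intervalIntegrable _ _)
        ((by fun_prop : Continuous fun u : ℝ => cf x t + u * (cf x t - cf x (t-1))).intervalIntegrable _ _)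
      intro u hu
      have hu0 := hu.1
      have hu1 := hu.2
      have h1u : 0 < 1 + u := by linarith
      have := cf_concave (x := x) (a := t + u) (b := t - 1) (u := u / (1 + u)) (by nlinarith) (by nlinarith) (by positivity) 
        (by rw [div_le_one h1u]; linarith)
      rw [show (1 - u / (1 + u)) * (t + u) + u / (1 + u) * (t - 1) = t by field_simp; ring] at this
      have e2 : (1 - u / (1 + u)) * cf x (t + u) + u / (1 + u) * cf x (t - 1) = (cf x (t + u) + u * cf x (t-1)) / (1 + u) := by
        field_simp; ring
      rw [e2, div_le_iff₀ h1u] at this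
      linarith
    have := (cf_diff hx h0 h1).2
    linarith

lemma trap (x : ℝ) (hx : 1 ≤ x) (M : ℕ) (hM : 2 * (M : ℝ) ^ 2 ≤ x) :
    0 ≤ (∫ u in (0:ℝ)..M, cf x u) - (∑ n ∈ Finset.Ico 1 (M+1), cf x n + (cf x 0 - cf x M) / 2) ∧
    (∫ u in (0:ℝ)..M, cf x u) - (∑ n ∈ Finset.Ico 1 (M+1), cf x n + (cf x 0 - cf x M) / 2) ≤ M * (3 / 2 * (1 / √x)) := by
  induction M with
  | zero => simp
  | succ M ih =>
    push_cast at hM ⊢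
    have := ih (by nlinarith [(Nat.cast_nonneg M : (0:ℝ) ≤ M)])
    have st := trap_step (x := x) (t := M) hx (by positivity) hM
    rw [Finset.sum_Ico_succ_top (by omega), ← intervalIntegral.integral_add_adjacent_intervals 
      ((cf_cont x).intervalIntegrable 0 M) ((cf_cont x).intervalIntegrable M (M+1))]
    push_cast
    constructor <;> linarith

lemma integral_cf (x : ℝ) (hx : 1 ≤ x) : ∫ u in (0:ℝ)..√(x/2), cf x u = π * x / 8 + x / 4 := by
  have hs : 0 < √x := by positivity
  have hss : √x ^ 2 = x := Real.sq_sqrt (by linarith)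
  have hs2 : √(x/2) ^ 2 = x / 2 := Real.sq_sqrt (by linarith)
  have hd : ∀ t ∈ Set.uIcc 0 (√(x/2)), HasDerivAt (fun t => (t * cf x t + x * arcsin (t / √x)) / 2) (cf x t) t := by
    intro t ht
    rw [Set.uIcc_of_le (by positivity)] at ht
    have ht2 : t ^ 2 ≤ x / 2 := by rw [← hs2]; exact pow_le_pow_left₀ ht.1 ht.2 2
    have hpos : 0 < x - t ^ 2 := by linarith
    have hc : 0 < cf x t := Real.sqrt_pos.2 hpos
    have hc2 : cf x t ^ 2 = x - t ^ 2 := by rw [pow_two]; exact cf_sq (by linarith)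
    have d1 : HasDerivAt (cf x) (-(2 * t) / (2 * cf x t)) t := by
      have : HasDerivAt (fun t => x - t ^ 2) (-(2 * t)) t := by
        simpa using (hasDerivAt_pow 2 t).const_sub x
      exact this.sqrt hpos.ne'
    have hlt : t / √x < 1 := by
      rw [div_lt_one hs]
      by_contra! hcc
      nlinarith
    have hgt : -1 < t / √x := by
      have : 0 ≤ t / √x := div_nonneg ht.1 hs.le
      linarith
    have d2 : HasDerivAt (fun t => arcsin (t / √x)) (1 / √(1 - (t / √x) ^ 2) * (1 / √x)) t := by
      have d0 : HasDerivAt (fun t => t / √x) (1 / √x) t := (hasDerivAt_id' t).div_const (√x)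
      exact HasDerivAt.comp t (Real.hasDerivAt_arcsin hgt.ne' hlt.ne) d0
    have e1 : √(1 - (t / √x) ^ 2) = cf x t / √x := by
      rw [div_pow, hss, cf, ← Real.sqrt_div hpos.le]
      congr 1
      field_simp
    rw [e1] at d2
    have d3 := (((hasDerivAt_id' t).mul d1).add (d2.const_mul x)).div_const 2
    refine HasDerivAt.congr_deriv (f := fun t => (t * cf x t + x * arcsin (t / √x)) / 2) d3 ?_
    field_simp
    rw [hc2]; ring
  rw [intervalIntegral.integral_eq_sub_of_hasDerivAt hd ((cf_cont x).intervalIntegrable _ _)]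
  have e2 : √(x/2) / √x = √2 / 2 := by
    rw [← Real.sqrt_div (by linarith), show x / 2 / x = 1/2 by field_simp, Real.sqrt_div_self', Real.sqrt_div zero_le_one, Real.sqrt_one]
  have e3 : arcsin (√2/2) = π / 4 := by
    rw [← Real.sin_pi_div_four, Real.arcsin_sin (by linarith [Real.pi_pos]) (by linarith [Real.pi_pos])]
  have e4 : cf x (√(x/2)) = √(x/2) := by
    unfold cf; rw [hs2]; congr 1; ring
  rw [e2, e3, e4]
  rw [← pow_two, hs2, zero_mul, zero_div, Real.arcsin_zero]; ring

/-- sum of cf with O(1) error -/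
lemma sum_cf (x : ℝ) (hx : 1 ≤ x) (M : ℕ) (hM : 2 * (M : ℝ) ^ 2 ≤ x) (hM' : x < 2 * ((M:ℝ)+1)^2) :
    |∑ n ∈ Finset.Ico 1 (M+1), cf x n - (π * x / 8 + M ^ 2 / 2 + M / 2 - √x / 2)| ≤ 10 := by
  have hs : 0 < √x := by positivity
  have hss : √x ^ 2 = x := Real.sq_sqrt (by linarith)
  set s := √(x/2) with hsdef
  have hsp : 0 ≤ s := Real.sqrt_nonneg _
  have hs2 : s ^ 2 = x / 2 := Real.sq_sqrt (by linarith)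
  have hM0 : (0:ℝ) ≤ M := by positivity
  have hMs : (M:ℝ) ≤ s := by
    by_contra! hc
    nlinarith
  have hMs' : s < M + 1 := by
    by_contra! hc
    nlinarith
  have hMx : (M:ℝ) ≤ √x := by
    by_contra! hc
    nlinarith
  obtain ⟨t1, t2⟩ := trap x hx M hM
  have h3 : (M:ℝ) * (3 / 2 * (1 / √x)) ≤ 3 / 2 := by
    have : (M:ℝ) * (1 / √x) ≤ 1 := by rw [mul_one_div, div_le_one hs]; exact hMx
    linarith
  have hI := integral_cf x hx
  rw [← intervalIntegral.integral_add_adjacent_intervals 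
      ((cf_cont x).intervalIntegrable 0 M) ((cf_cont x).intervalIntegrable M s)] at hI
  have bnd : ∀ u, (M:ℝ) ≤ u → u ≤ s → s ≤ cf x u ∧ cf x u ≤ s + 3 := by
    intro u h1 h2
    constructor
    · apply Real.le_sqrt_of_sq_le
      nlinarith
    · apply Real.sqrt_le_iff.2
      refine ⟨by linarith, ?_⟩
      nlinarith
  have i1 : (s - M) * s ≤ ∫ u in (M:ℝ)..s, cf x u := by
    have := intervalIntegral.integral_mono_on (μ := MeasureTheory.volume) hMs (by simp : IntervalIntegrable (fun _ => s) _ _ _) ((cf_cont x).intervalIntegrable M s) (fun u hu => (bnd u hu.1 hu.2).1)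
    simpa using this
  have i2 : ∫ u in (M:ℝ)..s, cf x u ≤ (s - M) * (s + 3) := by
    have := intervalIntegral.integral_mono_on (μ := MeasureTheory.volume) hMs ((cf_cont x).intervalIntegrable M s) (by simp : IntervalIntegrable (fun _ => s + 3) _ _ _) (fun u hu => (bnd u hu.1 hu.2).2)
    rw [intervalIntegral.integral_const, smul_eq_mul] at this
    exact this
  have b := bnd M le_rfl hMs
  have c0 : cf x 0 = √x := by unfold cf; simp
  rw [c0] at t1 t2
  rw [abs_le]
  have hd1 : (s - M) * (s - M) ≤ 1 * 1 := mul_le_mul (by linarith) (by linarith) (by linarith) (by norm_num)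
  have hd2 : 0 ≤ (s - M) * (s - M) := mul_self_nonneg _
  constructor <;> linarith

lemma ee_neg (t : ℝ) : ee (-t) = (starRingEnd ℂ) (ee t) := by
  unfold ee
  rw [← Complex.exp_conj]
  congr 1
  rw [map_mul, Complex.conj_ofReal, Complex.conj_I]
  push_cast
  ring

lemma exp_bound (y : ℝ) (hy : 1 ≤ y) (M : ℕ) (hM : 2 * (M : ℝ) ^ 2 ≤ y ^ 12) (h : ℕ) :
    ‖∑ n ∈ Finset.Ico 1 (M+1), ee ((h+1) * cf (y^12) n)‖ ≤ 37 * y ^ 3 * √((h:ℝ)+1) := by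
  have hy0 : 0 < y := by linarith
  have hy3 : 1 ≤ y ^ 3 := one_le_pow₀ hy
  have hh : 1 ≤ √((h:ℝ)+1) := by rw [Real.one_le_sqrt]; linarith [(Nat.cast_nonneg h : (0:ℝ) ≤ h)]
  rcases Nat.eq_zero_or_pos M with rfl | hMp
  · simp; positivity
  have hsx : √(y ^ 12) = y ^ 6 := by
    rw [show y ^ 12 = (y^6)^2 by ring, Real.sqrt_sq (by positivity)]
  have hM6 : (M:ℝ) ≤ y ^ 6 := by
    rw [← hsx]; apply Real.le_sqrt_of_sq_le; nlinarith [sq_nonneg (M:ℝ)]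
  rw [Finset.sum_Ico_succ_top (by omega)]
  refine (norm_add_le _ _).trans ?_
  rw [ee_norm]
  have e1 : ‖∑ n ∈ Finset.Ico 1 M, ee ((h+1) * cf (y^12) n)‖ = ‖∑ n ∈ Finset.Ico 1 M, ee (-((h+1) * cf (y^12) n))‖ := by
    simp only [ee_neg]
    rw [← map_sum, RCLike.norm_conj]
  have key : ∀ n : ℕ, n + 2 ≤ M → 
      1 / y ^ 6 ≤ 2 * cf (y^12) ((n + 1 : ℕ)) - cf (y^12) ((n + 2 : ℕ)) - cf (y^12) n ∧ 
      2 * cf (y^12) ((n + 1 : ℕ)) - cf (y^12) ((n + 2 : ℕ)) - cf (y^12) n ≤ 3 * (1 / y^6) := by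
    intro n hn
    have hn' : ((n:ℝ) + 2) ≤ M := by exact_mod_cast hn
    have := cf_diff (x := y ^ 12) (t := n + 1) (one_le_pow₀ hy) (by positivity) (by nlinarith [(Nat.cast_nonneg n : (0:ℝ) ≤ n)])
    rw [hsx, show (n:ℝ) + 1 + 1 = n + 2 by ring, show (n:ℝ) + 1 - 1 = n by ring] at this
    push_cast
    exact this
  have hp : (0:ℝ) < (h:ℝ) + 1 := by positivity
  have v := vdc (fun n => -((h+1) * cf (y^12) n)) ((h+1) * (1 / y ^ 6)) (by positivity) 1 M hMp
    (fun n _ hn' => by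
      have := mul_le_mul_of_nonneg_left (key n (by omega)).1 hp.le
      linarith)
    (fun n _ hn' => by
      have := mul_le_mul_of_nonneg_left (key n (by omega)).2 hp.le
      linarith)
  rw [← e1] at v
  have e2 : √(((h:ℝ)+1) * (1 / y ^ 6)) = √((h:ℝ)+1) / y ^ 3 := by
    rw [mul_one_div, Real.sqrt_div hp.le, show y ^ 6 = (y^3)^2 by ring, Real.sqrt_sq (by positivity)]
  rw [e2] at v
  have e3 : ((M - 1 : ℕ) : ℝ) ≤ y ^ 6 := le_trans (by exact_mod_cast Nat.sub_le M 1) hM6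
  have e4 : ((M - 1 : ℕ) : ℝ) * (√((h:ℝ)+1) / y ^ 3) ≤ y ^ 3 * √((h:ℝ)+1) := by
    calc _ ≤ y ^ 6 * (√((h:ℝ)+1) / y ^ 3) := by gcongr
      _ = _ := by field_simp
  have e5 : 1 / (√((h:ℝ)+1) / y ^ 3) ≤ y ^ 3 * √((h:ℝ)+1) := by
    rw [one_div_div, div_le_iff₀ (by positivity)]
    have : 1 ≤ √((h:ℝ)+1) * √((h:ℝ)+1) := by nlinarith
    nlinarith
  have e6 : 1 ≤ y ^ 3 * √((h:ℝ)+1) := by nlinarith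
  linarith

lemma psi_bound (y : ℝ) (hy : 1 ≤ y) (M : ℕ) (hM : 2 * (M : ℝ) ^ 2 ≤ y ^ 12) :
    |∑ n ∈ Finset.Ico 1 (M+1), (Int.fract (cf (y^12) n) - 1 / 2)| ≤ 300 * y ^ 4 := by
  have hy0 : 0 < y := by linarith
  have hy2 : 1 ≤ y ^ 2 := one_le_pow₀ hy
  have hH : 0 < ⌈y^2⌉₊ := Nat.ceil_pos.2 (by positivity)
  have := psi_sum (fun n => cf (y^12) n) (Finset.Ico 1 (M+1)) (37 * y ^ 3) (by positivity) (exp_bound y hy M hM) ⌈y^2⌉₊ hH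
  refine this.trans ?_
  have h1 : (⌈y^2⌉₊ : ℝ) < y ^ 2 + 1 := Nat.ceil_lt_add_one (by positivity)
  have h2 : y ^ 2 ≤ (⌈y^2⌉₊ : ℝ) := Nat.le_ceil _
  have h3 : √(⌈y^2⌉₊ : ℝ) ≤ 2 * y := by
    rw [Real.sqrt_le_iff]
    constructor
    · positivity
    · nlinarith
  have hM6 : (M:ℝ) ≤ y ^ 6 := by
    have : √(y ^ 12) = y ^ 6 := by
      rw [show y ^ 12 = (y^6)^2 by ring, Real.sqrt_sq (by positivity)]
    rw [← this]; apply Real.le_sqrt_of_sq_le; nlinarith [sq_nonneg (M:ℝ)]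
  have h4 : ((Finset.Ico 1 (M+1)).card : ℝ) / ⌈y^2⌉₊ ≤ y ^ 4 := by
    rw [Nat.card_Ico, Nat.add_sub_cancel, div_le_iff₀ (by exact_mod_cast hH)]
    calc (M:ℝ) ≤ y ^ 6 := hM6
      _ = y ^ 4 * y ^ 2 := by ring
      _ ≤ _ := by gcongr
  have h5 : 4 * (37 * y ^ 3) * √(⌈y^2⌉₊ : ℝ) ≤ 4 * (37 * y ^ 3) * (2 * y) := by gcongr
  have h6 : 0 ≤ y ^ 4 := by positivity
  nlinarith

open Classical in
noncomputable def AA (x : ℝ) : Finset (ℕ × ℕ) :=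
  (Finset.Ico 1 (⌊√x⌋₊ + 1) ×ˢ Finset.range (⌊√x⌋₊ + 1)).filter (fun p => (p.1:ℝ)^2 + (p.2:ℝ)^2 ≤ x)

lemma mem_AA {x : ℝ} (p : ℕ × ℕ) : p ∈ AA x ↔ 1 ≤ p.1 ∧ (p.1:ℝ)^2 + (p.2:ℝ)^2 ≤ x := by
  unfold AA
  simp only [Finset.mem_filter, Finset.mem_product, Finset.mem_Ico, Finset.mem_range, Nat.lt_add_one_iff]
  constructor
  · rintro ⟨⟨⟨h, _⟩, _⟩, h2⟩
    exact ⟨h, h2⟩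
  · rintro ⟨h, h2⟩
    refine ⟨⟨⟨h, ?_⟩, ?_⟩, h2⟩
    · apply Nat.le_floor; apply Real.le_sqrt_of_sq_le; nlinarith [sq_nonneg (p.2:ℝ)]
    · apply Nat.le_floor; apply Real.le_sqrt_of_sq_le; nlinarith [sq_nonneg (p.1:ℝ)]

open Classical in
noncomputable def QQ (x : ℝ) : Finset (ℕ × ℕ) :=
  (Finset.Ico 1 (⌊√x⌋₊ + 1) ×ˢ Finset.Ico 1 (⌊√x⌋₊ + 1)).filter (fun p => (p.1:ℝ)^2 + (p.2:ℝ)^2 ≤ x)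

lemma mem_QQ {x : ℝ} (p : ℕ × ℕ) : p ∈ QQ x ↔ 1 ≤ p.1 ∧ 1 ≤ p.2 ∧ (p.1:ℝ)^2 + (p.2:ℝ)^2 ≤ x := by
  unfold QQ
  simp only [Finset.mem_filter, Finset.mem_product, Finset.mem_Ico, Nat.lt_add_one_iff]
  constructor
  · rintro ⟨⟨⟨h, _⟩, h', _⟩, h2⟩
    exact ⟨h, h', h2⟩
  · rintro ⟨h, h', h2⟩
    refine ⟨⟨⟨h, ?_⟩, h', ?_⟩, h2⟩
    · apply Nat.le_floor; apply Real.le_sqrt_of_sq_le; nlinarith [sq_nonneg (p.2:ℝ)]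
    · apply Nat.le_floor; apply Real.le_sqrt_of_sq_le; nlinarith [sq_nonneg (p.1:ℝ)]

lemma AA_card {x : ℝ} : (AA x).card = (QQ x).card + ⌊√x⌋₊ := by
  classical
  have : AA x = QQ x ∪ (Finset.Ico 1 (⌊√x⌋₊ + 1)).image (fun a => (a, 0)) := by
    ext ⟨a, b⟩
    simp only [Finset.mem_union, mem_AA, mem_QQ, Finset.mem_image, Finset.mem_Ico, Nat.lt_add_one_iff, Nat.le_floor_iff (Real.sqrt_nonneg x), Prod.mk.injEq]
    constructor
    · rintro ⟨h1, h2⟩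
      rcases Nat.eq_zero_or_pos b with rfl | hb
      · right
        exact ⟨a, ⟨h1, Real.le_sqrt_of_sq_le (by simpa using h2)⟩, rfl, rfl⟩
      · exact Or.inl ⟨h1, hb, h2⟩
    · rintro (⟨h1, h2, h3⟩ | ⟨c, ⟨h1, h2⟩, rfl, rfl⟩)
      · exact ⟨h1, h3⟩
      · refine ⟨h1, ?_⟩
        have := (Real.le_sqrt' (by exact_mod_cast h1)).1 h2
        simpa using this
  rw [this, Finset.card_union_of_disjoint, Finset.card_image_of_injective, Nat.card_Ico]
  · simp
  · intro a b h; simpa using h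
  · rw [Finset.disjoint_left]
    rintro ⟨a, b⟩ h1 h2
    rw [mem_QQ] at h1
    simp at h2
    have := h1.2.1
    simp at this
    omega

lemma QQ_card {x : ℝ} (M : ℕ) (hM : 2 * (M : ℝ) ^ 2 ≤ x) (hM' : x < 2 * ((M:ℝ)+1)^2) :
    (QQ x).card + M ^ 2 = 2 * ∑ a ∈ Finset.Ico 1 (M+1), ⌊cf x a⌋₊ := by
  classical
  set U := (QQ x).filter (fun p => p.1 ≤ M) with hU
  set V := (QQ x).filter (fun p => p.2 ≤ M) with hV
  have hUV : U ∪ V = QQ x := by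
    ext p
    simp only [hU, hV, Finset.mem_union, Finset.mem_filter]
    constructor
    · rintro (h | h) <;> exact h.1
    · intro h
      by_contra! hc
      have h1 : M + 1 ≤ p.1 := hc.1 h
      have h2 : M + 1 ≤ p.2 := hc.2 h
      have h3 := ((mem_QQ p).1 h).2.2
      have h1' : (M:ℝ) + 1 ≤ p.1 := by exact_mod_cast h1
      have h2' : (M:ℝ) + 1 ≤ p.2 := by exact_mod_cast h2
      have : (0:ℝ) ≤ M := by positivity
      nlinarith
  have hI : U ∩ V = Finset.Ico 1 (M+1) ×ˢ Finset.Ico 1 (M+1) := by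
    ext p
    simp only [hU, hV, Finset.mem_inter, Finset.mem_filter, mem_QQ, Finset.mem_product, Finset.mem_Ico, Nat.lt_add_one_iff]
    constructor
    · rintro ⟨⟨⟨h1, h2, h3⟩, h4⟩, _, h5⟩
      exact ⟨⟨h1, h4⟩, h2, h5⟩
    · rintro ⟨⟨h1, h4⟩, h2, h5⟩
      have h4' : (p.1:ℝ) ≤ M := by exact_mod_cast h4
      have h5' : (p.2:ℝ) ≤ M := by exact_mod_cast h5
      have h6 : (0:ℝ) ≤ p.1 := by positivity
      have h7 : (0:ℝ) ≤ p.2 := by positivity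
      have : (p.1:ℝ)^2 + (p.2:ℝ)^2 ≤ x := by nlinarith
      exact ⟨⟨⟨h1, h2, this⟩, h4⟩, ⟨h1, h2, this⟩, h5⟩
  have hVU : V = U.image Prod.swap := by
    ext ⟨a, b⟩
    simp only [hU, hV, Finset.mem_image, Finset.mem_filter, mem_QQ, Prod.exists, Prod.swap_prod_mk, Prod.mk.injEq]
    constructor
    · rintro ⟨⟨h1, h2, h3⟩, h4⟩
      exact ⟨b, a, ⟨⟨h2, h1, by linarith⟩, h4⟩, rfl, rfl⟩
    · rintro ⟨c, d, ⟨⟨h1, h2, h3⟩, h4⟩, rfl, rfl⟩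
      exact ⟨⟨h2, h1, by linarith⟩, h4⟩
  have hVc : V.card = U.card := by rw [hVU, Finset.card_image_of_injective _ Prod.swap_injective]
  have hUc : U.card = ∑ a ∈ Finset.Ico 1 (M+1), ⌊cf x a⌋₊ := by
    have : U = (Finset.Ico 1 (M+1)).biUnion (fun a => (Finset.Ico 1 (⌊cf x a⌋₊ + 1)).image (fun b => (a, b))) := by
      ext ⟨a, b⟩
      simp only [hU, Finset.mem_filter, mem_QQ, Finset.mem_biUnion, Finset.mem_image, Finset.mem_Ico, Nat.lt_add_one_iff, Nat.le_floor_iff (cf_nonneg x _), Prod.mk.injEq]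
      constructor
      · rintro ⟨⟨h1, h2, h3⟩, h4⟩
        exact ⟨a, ⟨h1, h4⟩, b, ⟨h2, Real.le_sqrt_of_sq_le (by linarith)⟩, rfl, rfl⟩
      · rintro ⟨a', ⟨h1, h4⟩, b', ⟨h2, h3⟩, rfl, rfl⟩
        have := (Real.le_sqrt' (by exact_mod_cast h2)).1 h3
        exact ⟨⟨h1, h2, by linarith⟩, h4⟩
    rw [this, Finset.card_biUnion]
    · apply Finset.sum_congr rfl
      intro a _
      rw [Finset.card_image_of_injective, Nat.card_Ico, Nat.add_sub_cancel]
      intro b c h; simpa using h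
    · intro a _ b _ hab
      rw [Function.onFun, Finset.disjoint_left]
      rintro ⟨c, d⟩ h1 h2
      simp only [Finset.mem_image, Prod.mk.injEq] at h1 h2
      obtain ⟨_, _, h1, _⟩ := h1
      obtain ⟨_, _, h2, _⟩ := h2
      exact hab (h1.trans h2.symm)
  have := Finset.card_union_add_card_inter U V
  rw [hUV, hI, Finset.card_product, Nat.card_Ico, Nat.add_sub_cancel, hVc, hUc] at this
  rw [pow_two]
  omega

lemma AA_asymp (y : ℝ) (hy : 1 ≤ y) : |((AA (y^12)).card : ℝ) - π * y ^ 12 / 4| ≤ 650 * y ^ 4 := by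
  have hx : 1 ≤ y ^ 12 := one_le_pow₀ hy
  have hy4 : 1 ≤ y ^ 4 := one_le_pow₀ hy
  set x := y ^ 12 with hxd
  have hs2 : √(x/2) ^ 2 = x / 2 := Real.sq_sqrt (by linarith)
  set M := ⌊√(x/2)⌋₊ with hMd
  have m1 : (M:ℝ) ≤ √(x/2) := Nat.floor_le (by positivity)
  have m2 : √(x/2) < M + 1 := Nat.lt_floor_add_one _
  have m0 : (0:ℝ) ≤ M := by positivity
  have m3 : (0:ℝ) ≤ √(x/2) := by positivity
  have hM : 2 * (M : ℝ) ^ 2 ≤ x := by nlinarith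
  have hM' : x < 2 * ((M:ℝ)+1)^2 := by nlinarith
  have q := QQ_card M hM hM'
  have a := AA_card (x := x)
  have p := psi_bound y hy M hM
  have s := sum_cf x hx M hM hM'
  rw [← hxd] at p
  have e : ((∑ a ∈ Finset.Ico 1 (M+1), ⌊cf x a⌋₊ : ℕ) : ℝ) = ∑ n ∈ Finset.Ico 1 (M+1), cf x n - M / 2 - ∑ n ∈ Finset.Ico 1 (M+1), (Int.fract (cf x n) - 1 / 2) := by
    rw [Finset.sum_sub_distrib, Finset.sum_const, Nat.card_Ico, Nat.add_sub_cancel, nsmul_eq_mul]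
    have : ∑ n ∈ Finset.Ico 1 (M+1), Int.fract (cf x n) = ∑ n ∈ Finset.Ico 1 (M+1), cf x n - ((∑ a ∈ Finset.Ico 1 (M+1), ⌊cf x a⌋₊ : ℕ) : ℝ) := by
      push_cast
      rw [← Finset.sum_sub_distrib]
      apply Finset.sum_congr rfl
      intro n _
      rw [natCast_floor_eq_intCast_floor (cf_nonneg x n)]
      rfl
    rw [this]; ring
  have q' : ((QQ x).card : ℝ) + M ^ 2 = 2 * ((∑ a ∈ Finset.Ico 1 (M+1), ⌊cf x a⌋₊ : ℕ) : ℝ) := by exact_mod_cast q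
  have a' : ((AA x).card : ℝ) = (QQ x).card + (⌊√x⌋₊ : ℝ) := by exact_mod_cast a
  have r1 : (⌊√x⌋₊ : ℝ) ≤ √x := Nat.floor_le (by positivity)
  have r2 : √x < ⌊√x⌋₊ + 1 := Nat.lt_floor_add_one _
  rw [abs_le] at *
  constructor <;> linarith

noncomputable def gEquiv : GaussianInt ≃ₗ[ℤ] (Fin 2 → ℤ) where
  toFun z := ![z.re, z.im]
  invFun v := ⟨v 0, v 1⟩
  map_add' a b := by ext i; fin_cases i <;> simp
  map_smul' c a := by ext i; fin_cases i <;> simp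
  left_inv a := by simp
  right_inv v := by ext i; fin_cases i <;> simp

noncomputable def gBasis : Module.Basis (Fin 2) ℤ GaussianInt := Module.Basis.ofEquivFun gEquiv

lemma normI_span (z : GaussianInt) : (normI (Ideal.span {z}) : ℤ) = z.re ^ 2 + z.im ^ 2 := by
  haveI : Module.Free ℤ GaussianInt := Module.Free.of_basis gBasis
  haveI : Module.Finite ℤ GaussianInt := Module.Finite.of_basis gBasis
  have h1 : normI (Ideal.span {z}) = Ideal.absNorm (Ideal.span {z}) := by
    rw [Ideal.absNorm_apply]; rfl
  rw [h1, Ideal.absNorm_span_singleton, Algebra.norm_eq_matrix_det gBasis]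
  have : (Algebra.leftMulMatrix gBasis z).det = z.re ^ 2 + z.im ^ 2 := by
    rw [Matrix.det_fin_two]
    simp [Algebra.leftMulMatrix_eq_repr_mul, gBasis, gEquiv]
    ring
  rw [this, Int.natCast_natAbs, abs_of_nonneg (by positivity)]

lemma unit_cases (u : GaussianInt) (hu : IsUnit u) :
    u = ⟨1, 0⟩ ∨ u = ⟨-1, 0⟩ ∨ u = ⟨0, 1⟩ ∨ u = ⟨0, -1⟩ := by
  have h := (Zsqrtd.norm_eq_one_iff' (by norm_num) u).2 hu
  rw [Zsqrtd.norm_def] at h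
  have h1 : u.re * u.re + u.im * u.im = 1 := by linarith
  have h2 : u.re ≤ 1 := by nlinarith
  have h3 : -1 ≤ u.re := by nlinarith
  have h4 : u.im ≤ 1 := by nlinarith
  have h5 : -1 ≤ u.im := by nlinarith
  obtain ⟨a, b⟩ := u
  simp only at *
  interval_cases a <;> interval_cases b <;> simp_all

lemma ideal_set (x : ℝ) (hx : 0 ≤ x) : {I : Ideal GaussianInt | I ≠ ⊥ ∧ (normI I : ℝ) ≤ x}
    = (fun p : ℕ × ℕ => Ideal.span {(⟨p.1, p.2⟩ : GaussianInt)}) '' (AA x : Set (ℕ × ℕ)) := by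
  have nr : ∀ z : GaussianInt, (normI (Ideal.span {z}) : ℝ) = (z.re:ℝ)^2 + (z.im:ℝ)^2 := by
    intro z; exact_mod_cast normI_span z
  ext I
  simp only [Set.mem_setOf_eq, Set.mem_image, Finset.mem_coe, mem_AA]
  constructor
  · rintro ⟨h1, h2⟩
    obtain ⟨z, hz⟩ := (IsPrincipalIdealRing.principal I).principal
    change I = Ideal.span {z} at hz
    subst hz
    have hz0 : z ≠ 0 := by
      rintro rfl; simp at h1
    -- find associate
    have key : ∃ w : GaussianInt, Associated w z ∧ 0 < w.re ∧ 0 ≤ w.im := by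
      obtain ⟨a, b⟩ := z
      have hi : IsUnit (⟨0, 1⟩ : GaussianInt) := by
        rw [← Zsqrtd.norm_eq_one_iff' (by norm_num)]; simp [Zsqrtd.norm_def]
      obtain ⟨i, hi⟩ := hi
      have hz0' : ¬ (a = 0 ∧ b = 0) := by
        rintro ⟨rfl, rfl⟩; exact hz0 rfl
      by_cases c1 : 0 < a ∧ 0 ≤ b
      · exact ⟨⟨a, b⟩, Associated.refl _, c1.1, c1.2⟩
      by_cases c2 : a ≤ 0 ∧ 0 < b
      · refine ⟨⟨b, -a⟩, ⟨i, ?_⟩, c2.2, by simp; omega⟩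
        rw [hi]; ext <;> simp
      by_cases c3 : a < 0 ∧ b ≤ 0
      · refine ⟨⟨-a, -b⟩, ⟨i * i, ?_⟩, by simp; omega, by simp; omega⟩
        push_cast
        rw [hi]; ext <;> simp
      · refine ⟨⟨-b, a⟩, ⟨i * i * i, ?_⟩, by simp; omega, by simp; omega⟩
        push_cast
        rw [hi]; ext <;> simp
    obtain ⟨w, hw, hw1, hw2⟩ := key
    have hsp : Ideal.span {w} = Ideal.span {z} := Ideal.span_singleton_eq_span_singleton.2 hw
    obtain ⟨a, b⟩ := w
    simp only at hw1 hw2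
    obtain ⟨a, rfl⟩ := Int.eq_ofNat_of_zero_le hw1.le
    obtain ⟨b, rfl⟩ := Int.eq_ofNat_of_zero_le hw2
    refine ⟨(a, b), ⟨by simp only; omega, ?_⟩, hsp⟩
    rw [← hsp, nr] at h2
    simpa using h2
  · rintro ⟨⟨a, b⟩, ⟨h1, h2⟩, rfl⟩
    constructor
    · simp only [ne_eq, Ideal.span_singleton_eq_bot]
      intro h
      have := congrArg Zsqrtd.re h
      simp at this h1
      omega
    · rw [nr]; simpa using h2

lemma ideal_inj (x : ℝ) (hx : 0 ≤ x) : Set.InjOn (fun p : ℕ × ℕ => Ideal.span {(⟨p.1, p.2⟩ : GaussianInt)}) (AA x : Set (ℕ × ℕ)) := by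
  rintro ⟨a, b⟩ h1 ⟨c, d⟩ h2 h
  rw [Finset.mem_coe, mem_AA] at h1 h2
  have h1 := h1.1
  have h2 := h2.1
  simp only at h1 h2
  obtain ⟨u, hu⟩ := Ideal.span_singleton_eq_span_singleton.1 h
  have hre := congrArg Zsqrtd.re hu
  have him := congrArg Zsqrtd.im hu
  rcases unit_cases u u.isUnit with e | e | e | e <;> rw [e] at hre him <;> simp at hre him <;>
    (ext <;> simp <;> omega)

lemma P_card (x : ℝ) (hx : 0 ≤ x) : (P x).ncard = (AA x).card * (AA x).card := by
  have : P x = {I : Ideal GaussianInt | I ≠ ⊥ ∧ (normI I : ℝ) ≤ x} ×ˢ {I : Ideal GaussianInt | I ≠ ⊥ ∧ (normI I : ℝ) ≤ x} := by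
    ext ⟨I, J⟩
    simp only [P, Set.mem_setOf_eq, Set.mem_prod]
    tauto
  rw [this, Set.ncard_prod, ideal_set x hx, Set.InjOn.ncard_image (ideal_inj x hx), Set.ncard_coe_finset]

theorem pairCount_asymptotic :
    ∃ C : ℝ, 0 < C ∧ ∀ x : ℝ, 1 ≤ x →
      |((P x).ncard : ℝ) - π ^ 2 * x ^ 2 / 16| ≤ C * x ^ ((4 : ℝ) / 3) := by
  refine ⟨650 * 652, by norm_num, ?_⟩
  intro x hx
  have hx0 : 0 ≤ x := by linarith
  set y := x ^ ((1:ℝ) / 12) with hy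
  have hy1 : 1 ≤ y := Real.one_le_rpow hx (by norm_num)
  have hyx : y ^ 12 = x := by
    rw [hy, ← Real.rpow_natCast, ← Real.rpow_mul hx0]; norm_num
  have hy16 : x ^ ((4:ℝ)/3) = y ^ 16 := by
    rw [hy, ← Real.rpow_natCast, ← Real.rpow_mul hx0]; norm_num
  have h := AA_asymp y hy1
  rw [P_card x hx0, hy16]
  rw [← hyx]
  set A := ((AA (y^12)).card : ℝ) with hA
  push_cast
  rw [← hA]
  have e : A * A - π ^ 2 * (y ^ 12) ^ 2 / 16 = (A - π * y ^ 12 / 4) * (A + π * y ^ 12 / 4) := by ring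
  rw [e, abs_mul]
  have hA0 : 0 ≤ A := by positivity
  have h412 : y ^ 4 ≤ y ^ 12 := pow_le_pow_right₀ hy1 (by norm_num)
  have h12 : 0 < y ^ 12 := by positivity
  have hp : π * y ^ 12 ≤ 4 * y ^ 12 := by
    have := Real.pi_le_four
    gcongr
  have h2 : |A + π * y ^ 12 / 4| ≤ 652 * y ^ 12 := by
    rw [abs_of_nonneg (by positivity)]
    have := (abs_le.1 h).2
    linarith
  calc _ ≤ (650 * y ^ 4) * (652 * y ^ 12) := by gcongr
    _ = _ := by ring
end

section
/- For every nonzero ideal K of ℤ[i] and every real x ≥ 0, the number of pairs (I, J) of nonzero ideals of ℤ[i] with N(I) ≤ x, N(J) ≤ x and I ⊔ J = K equals the number of pairs (I', J') of nonzero ideals of ℤ[i] with N(I') ≤ x/N(K), N(J') ≤ x/N(K) and I' ⊔ J' = ⊤. -/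
def giEquiv : GaussianInt ≃ₗ[ℤ] (ℤ × ℤ) where
  toFun z := (z.re, z.im)
  invFun p := ⟨p.1, p.2⟩
  map_add' a b := by ext <;> simp
  map_smul' a b := by ext <;> simp
  left_inv a := rfl
  right_inv a := rfl

instance giFree : Module.Free ℤ GaussianInt := Module.Free.of_equiv giEquiv.symm

instance giFinite : Module.Finite ℤ GaussianInt := Module.Finite.equiv giEquiv.symm

lemma normI_eq (I : Ideal GaussianInt) : normI I = Ideal.absNorm I := rfl

theorem gcdPairCount_eq_coprimePairCount (K : Ideal GaussianInt) (hK : K ≠ ⊥)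
    (x : ℝ) (hx : 0 ≤ x) :
    {p : Ideal GaussianInt × Ideal GaussianInt | p.1 ≠ ⊥ ∧ p.2 ≠ ⊥ ∧
        (normI p.1 : ℝ) ≤ x ∧ (normI p.2 : ℝ) ≤ x ∧ p.1 ⊔ p.2 = K}.ncard =
    {p : Ideal GaussianInt × Ideal GaussianInt | p.1 ≠ ⊥ ∧ p.2 ≠ ⊥ ∧
        (normI p.1 : ℝ) ≤ x / (normI K : ℝ) ∧ (normI p.2 : ℝ) ≤ x / (normI K : ℝ) ∧
        p.1 ⊔ p.2 = ⊤}.ncard := by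
  have hN : (0 : ℝ) < (normI K : ℝ) := by
    rw [normI_eq]
    exact_mod_cast Nat.pos_of_ne_zero (fun h => hK (Ideal.absNorm_eq_zero_iff.mp h))
  have hmul : ∀ I : Ideal GaussianInt,
      (normI (K * I) : ℝ) ≤ x ↔ (normI I : ℝ) ≤ x / (normI K : ℝ) := by
    intro I
    rw [le_div_iff₀ hN, normI_eq, normI_eq, normI_eq, map_mul, Nat.cast_mul, mul_comm]
  have hK0 : K ≠ 0 := hK
  have hbot : ∀ I : Ideal GaussianInt, K * I ≠ ⊥ ↔ I ≠ ⊥ := by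
    intro I
    rw [Ne, Ideal.mul_eq_bot]
    simp [hK]
  have hsup : ∀ I J : Ideal GaussianInt, K * I ⊔ K * J = K ↔ I ⊔ J = ⊤ := by
    intro I J
    rw [← Ideal.mul_sup]
    constructor
    · intro h
      apply mul_left_cancel₀ hK0
      rw [h, Ideal.mul_top]
    · intro h
      rw [h, Ideal.mul_top]
  let f : Ideal GaussianInt × Ideal GaussianInt → Ideal GaussianInt × Ideal GaussianInt :=
    fun p => (K * p.1, K * p.2)
  have hf : Function.Injective f := by
    rintro ⟨a, b⟩ ⟨c, d⟩ h
    have h1 := congrArg Prod.fst h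
    have h2 := congrArg Prod.snd h
    exact Prod.ext (mul_left_cancel₀ hK0 h1) (mul_left_cancel₀ hK0 h2)
  symm
  rw [← Set.ncard_image_of_injective _ hf]
  congr 1
  ext ⟨I, J⟩
  constructor
  · rintro ⟨⟨a, b⟩, ⟨h1, h2, h3, h4, h5⟩, h⟩
    rw [← h]
    exact ⟨(hbot a).2 h1, (hbot b).2 h2, (hmul a).2 h3, (hmul b).2 h4, (hsup a b).2 h5⟩
  · rintro ⟨h1, h2, h3, h4, h5⟩
    simp only at h1 h2 h3 h4 h5
    obtain ⟨a, rfl⟩ : K ∣ I := Ideal.dvd_iff_le.2 (h5 ▸ le_sup_left)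
    obtain ⟨b, rfl⟩ : K ∣ J := Ideal.dvd_iff_le.2 (h5 ▸ le_sup_right)
    exact ⟨(a, b), ⟨(hbot a).1 h1, (hbot b).1 h2, (hmul a).1 h3, (hmul b).1 h4,
      (hsup a b).1 h5⟩, rfl⟩
end
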